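/- Let F be a finite field of odd cardinality q, let ε ∈ F be a nonsquare and let v ∈ F be nonzero. Let X be the 2×2 matrix over F with rows (0, v) and (εv, 0). Then the orbit of X under the conjugation action of SL(2,F) (the group of 2×2 matrices over F of determinant 1) is exactly the set of all 2×2 matrices A over F with trace A = 0 and det A = −εv². -/

import Mathlib

/-!
For a `2 × 2` matrix `A` and a vector `w`, let `P` be the matrix with columns `w` and `A w`. By
Cayley–Hamilton, `A P = P C` where `C` is the companion matrix of the characteristic polynomial of
`A`. As a function of `w`, `det P` is a binary quadratic form with the same discriminant as `A`.
When this discriminant is nonzero, the form represents `1` over a finite field, so `P` can be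
chosen in `SL(2, F)`. Hence two matrices with the same trace, determinant and nonzero discriminant
are `SL(2, F)`-conjugate, both being conjugate to `C`. The matrix `!![0, v; ε * v, 0]` has
discriminant `4 ε v²`.
-/

section FiniteField

variable {F : Type*} [Field F] [Finite F]

theorem two_ne_zero_of_odd_natCard (hF : Odd (Nat.card F)) : (2 : F) ≠ 0 := by
  have := Fintype.ofFinite F
  rw [Nat.card_eq_fintype_card, ← Nat.not_even_iff_odd, Nat.even_iff,
    ← FiniteField.even_card_iff_char_two] at hF
  exact Ring.two_ne_zero hF

theorem exists_sq_sub_mul_sq_eq {D : F} (hD : D ≠ 0) (t : F) :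
    ∃ x y : F, x ^ 2 - D * y ^ 2 = t := by
  have := Fintype.ofFinite F
  by_cases hF : ringChar F = 2
  · obtain ⟨s, rfl⟩ := FiniteField.isSquare_of_char_two hF t
    exact ⟨s, 0, by ring⟩
  · obtain ⟨x, y, hxy⟩ := FiniteField.exists_root_sum_quadratic
      (Polynomial.degree_X_pow_sub_C two_pos t)
      (Polynomial.degree_C_mul_X_pow 2 (neg_ne_zero.mpr hD))
      (FiniteField.odd_card_of_char_ne_two hF)
    simp only [Polynomial.eval_sub, Polynomial.eval_mul, Polynomial.eval_pow, Polynomial.eval_X,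
      Polynomial.eval_C] at hxy
    exact ⟨x, y, by linear_combination hxy⟩

theorem exists_binary_quadratic_eq {a b c : F} (h : discrim a b c ≠ 0) (t : F) :
    ∃ x y : F, a * x ^ 2 + b * x * y + c * y ^ 2 = t := by
  by_cases ha : a = 0
  · have hb : b ≠ 0 := by
      rintro rfl
      simp [discrim, ha] at h
    exact ⟨(t - c) / b, 1, by rw [ha]; field_simp; ring⟩
  by_cases hF : ringChar F = 2
  · obtain ⟨s, hs⟩ := FiniteField.isSquare_of_char_two hF (t / a)
    have hs : t = a * (s * s) := by rw [← hs, mul_div_cancel₀ t ha]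
    exact ⟨s, 0, by rw [hs]; ring⟩
  · have h2 : (2 : F) ≠ 0 := Ring.two_ne_zero hF
    obtain ⟨u, y, huy⟩ := exists_sq_sub_mul_sq_eq h (4 * a * t)
    refine ⟨(u - b * y) / (2 * a), y, ?_⟩
    rw [discrim] at huy
    field_simp
    linear_combination huy

end FiniteField

section Conjugation

open Matrix

variable {n R : Type*} [Fintype n] [DecidableEq n] [CommRing R]

theorem eq_specialLinearGroup_conj_iff {g : SpecialLinearGroup n R} {A B : Matrix n n R} :
    A = g * B * (g⁻¹ : SpecialLinearGroup n R) ↔ A * g = g * B :=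
  Units.eq_mul_inv_iff_mul_eq g.toGL

theorem trace_specialLinearGroup_conj (g : SpecialLinearGroup n R) (A : Matrix n n R) :
    (g * A * (g⁻¹ : SpecialLinearGroup n R) : Matrix n n R).trace = A.trace :=
  trace_units_conj g.toGL A

theorem det_specialLinearGroup_conj (g : SpecialLinearGroup n R) (A : Matrix n n R) :
    (g * A * (g⁻¹ : SpecialLinearGroup n R) : Matrix n n R).det = A.det :=
  det_units_conj g.toGL A

theorem exists_specialLinearGroup_conj_of_common {A B C : Matrix n n R}
    (hA : ∃ g : SpecialLinearGroup n R, A = g * C * (g⁻¹ : SpecialLinearGroup n R))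
    (hB : ∃ g : SpecialLinearGroup n R, B = g * C * (g⁻¹ : SpecialLinearGroup n R)) :
    ∃ g : SpecialLinearGroup n R, A = g * B * (g⁻¹ : SpecialLinearGroup n R) := by
  obtain ⟨g, hg⟩ := hA
  obtain ⟨k, hk⟩ := hB
  have hAg : SemiconjBy (g : Matrix n n R) C A := (eq_specialLinearGroup_conj_iff.mp hg).symm
  have hBk : SemiconjBy (k.toGL : Matrix n n R) C B := (eq_specialLinearGroup_conj_iff.mp hk).symm
  exact ⟨g * k⁻¹, eq_specialLinearGroup_conj_iff.mpr (hAg.mul_left hBk.units_inv_symm_left).eq.symm⟩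

end Conjugation

section FinTwo

open Matrix

variable {R : Type*} [CommRing R]

/-- The companion matrix of the polynomial `X ^ 2 - t * X + d`, the normal form of a `2 × 2` matrix
of trace `t` and determinant `d`. -/
def companionFinTwo (t d : R) : Matrix (Fin 2) (Fin 2) R :=
  !![0, -d; 1, t]

/-- The Krylov matrix of `A` and `w`: its columns are `w` and `A *ᵥ w`. It serves as a change of
basis bringing `A` into companion form. -/
def krylovFinTwo (A : Matrix (Fin 2) (Fin 2) R) (w : Fin 2 → R) : Matrix (Fin 2) (Fin 2) R :=
  !![w 0, (A *ᵥ w) 0; w 1, (A *ᵥ w) 1]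

theorem mul_krylovFinTwo (A : Matrix (Fin 2) (Fin 2) R) (w : Fin 2 → R) :
    A * krylovFinTwo A w = krylovFinTwo A w * companionFinTwo A.trace A.det := by
  ext i j
  rw [mul_apply, mul_apply, Fin.sum_univ_two, Fin.sum_univ_two, trace_fin_two, det_fin_two]
  fin_cases i <;> fin_cases j <;>
    simp [krylovFinTwo, companionFinTwo, mulVec, dotProduct] <;> ring

theorem det_krylovFinTwo (A : Matrix (Fin 2) (Fin 2) R) (x y : R) :
    (krylovFinTwo A ![x, y]).det = A 1 0 * x ^ 2 + (A 1 1 - A 0 0) * x * y + -A 0 1 * y ^ 2 := by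
  rw [krylovFinTwo, det_fin_two_of]
  simp only [mulVec, dotProduct, Fin.sum_univ_two, cons_val_zero, cons_val_one]
  ring

theorem discrim_fin_two_eq_discr (A : Matrix (Fin 2) (Fin 2) R) :
    discrim (A 1 0) (A 1 1 - A 0 0) (-A 0 1) = A.discr := by
  rw [discrim, discr_fin_two, trace_fin_two, det_fin_two]
  ring

theorem discr_antidiagonal_ne_zero [NoZeroDivisors R] (h2 : (2 : R) ≠ 0) {b c : R} (hb : b ≠ 0)
    (hc : c ≠ 0) : !![0, b; c, 0].discr ≠ 0 := by
  have hdiscr : !![0, b; c, 0].discr = 2 * 2 * (b * c) := by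
    rw [discr_fin_two, trace_fin_two_of, det_fin_two_of]
    ring
  rw [hdiscr]
  exact mul_ne_zero (mul_ne_zero h2 h2) (mul_ne_zero hb hc)

theorem exists_specialLinearGroup_conj_companionFinTwo {F : Type*} [Field F] [Finite F]
    {A : Matrix (Fin 2) (Fin 2) F} (hA : A.discr ≠ 0) :
    ∃ g : SpecialLinearGroup (Fin 2) F,
      A = g * companionFinTwo A.trace A.det * (g⁻¹ : SpecialLinearGroup (Fin 2) F) := by
  rw [← discrim_fin_two_eq_discr] at hA
  obtain ⟨x, y, hxy⟩ := exists_binary_quadratic_eq hA 1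
  exact ⟨⟨krylovFinTwo A ![x, y], (det_krylovFinTwo A x y).trans hxy⟩,
    eq_specialLinearGroup_conj_iff.mpr (mul_krylovFinTwo A _)⟩

end FinTwo

theorem stmt1_general {F : Type*} [Field F] [Finite F] {M : Matrix (Fin 2) (Fin 2) F}
    (hM : M.discr ≠ 0) :
    {A : Matrix (Fin 2) (Fin 2) F |
        ∃ g : Matrix.SpecialLinearGroup (Fin 2) F,
          A = (g : Matrix (Fin 2) (Fin 2) F) * M *
              ((g⁻¹ : Matrix.SpecialLinearGroup (Fin 2) F) : Matrix (Fin 2) (Fin 2) F)} =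
      {A : Matrix (Fin 2) (Fin 2) F | A.trace = M.trace ∧ A.det = M.det} := by
  ext A
  constructor
  · rintro ⟨g, rfl⟩
    exact ⟨trace_specialLinearGroup_conj g M, det_specialLinearGroup_conj g M⟩
  · rintro ⟨htrace, hdet⟩
    have hA : A.discr ≠ 0 := by
      rwa [Matrix.discr_fin_two, htrace, hdet, ← Matrix.discr_fin_two]
    have hAC := exists_specialLinearGroup_conj_companionFinTwo hA
    rw [htrace, hdet] at hAC
    exact exists_specialLinearGroup_conj_of_common hAC
      (exists_specialLinearGroup_conj_companionFinTwo hM)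

/-- Let `F` be a finite field of odd cardinality, `ε ∈ F` a nonsquare and `v ∈ F` nonzero.
Let `X = !![0, v; ε·v, 0]`.  Then the conjugation orbit of `X` under `SL(2,F)` is exactly
the set of `2×2` matrices `A` over `F` with `trace A = 0` and `det A = −ε·v²`. -/
theorem stmt1 (F : Type*) [Field F] [Fintype F] (hq : Odd (Fintype.card F))
    (ε v : F) (hε0 : ε ≠ 0) (hε : ¬ IsSquare ε) (hv : v ≠ 0) :
    {A : Matrix (Fin 2) (Fin 2) F |
        ∃ g : Matrix.SpecialLinearGroup (Fin 2) F,
          A = (g : Matrix (Fin 2) (Fin 2) F) * !![0, v; ε * v, 0] *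
              ((g⁻¹ : Matrix.SpecialLinearGroup (Fin 2) F) : Matrix (Fin 2) (Fin 2) F)} =
      {A : Matrix (Fin 2) (Fin 2) F | A.trace = 0 ∧ A.det = -(ε * v ^ 2)} := by
  have h2 : (2 : F) ≠ 0 := two_ne_zero_of_odd_natCard (by rwa [Nat.card_eq_fintype_card])
  simpa [Matrix.trace_fin_two, Matrix.det_fin_two, mul_left_comm v, ← sq] using
    stmt1_general (discr_antidiagonal_ne_zero h2 hv (mul_ne_zero hε0 hv))
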